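/- Let x be a complex number with Re(x) > 0. Define, for m ≥ 1, κ_{2m} = 2(3m−1)³/(27(2m−1)) and κ_{2m−1} = 2(3m−2)³/(27(2m−1)). Then the continued fraction x/2 + K_{m=1}^∞(κ_m/x) (all partial denominators after the initial term equal to x) converges to a nonzero value v, and Γ((x+2/3)/2)³ / Γ((x+4/3)/2)³ = 1/v. -/

import Mathlib

open Filter

noncomputable def cfA (a b : ℕ → ℂ) : ℕ → ℂ
  | 0 => 1
  | 1 => b 0
  | n + 2 => b (n + 1) * cfA a b (n + 1) + a (n + 1) * cfA a b n

noncomputable def cfB (a b : ℕ → ℂ) : ℕ → ℂ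
  | 0 => 0
  | 1 => 1
  | n + 2 => b (n + 1) * cfB a b (n + 1) + a (n + 1) * cfB a b n

/-- The continued fraction `b 0 + K_{n=1}^∞ (a n / b n)` converges to `v`. -/
def CFConvergesTo (a b : ℕ → ℂ) (v : ℂ) : Prop :=
  (∀ᶠ n in atTop, cfB a b n ≠ 0) ∧
    Tendsto (fun n => cfA a b n / cfB a b n) atTop (nhds v)

/-- `κ_{2m} = 2(3m−1)³/(27(2m−1))`, `κ_{2m−1} = 2(3m−2)³/(27(2m−1))`. -/
noncomputable def aSeq : ℕ → ℂ := fun n =>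
  if n % 2 = 0 then
    2 * (3 * ((n / 2 : ℕ) : ℂ) - 1) ^ 3 / (27 * (2 * ((n / 2 : ℕ) : ℂ) - 1))
  else
    2 * (3 * (((n + 1) / 2 : ℕ) : ℂ) - 2) ^ 3 / (27 * (2 * (((n + 1) / 2 : ℕ) : ℂ) - 1))

/-- `b_0 = x/2`, and all later partial denominators equal `x`. -/
noncomputable def bSeq (x : ℂ) : ℕ → ℂ := fun n => if n = 0 then x / 2 else x

/-!
Write `V x` for the value of the continued fraction `x / 2 + K (κₙ / x)`. For positive `κₙ` and
`0 < Re x`, the quantities `Re (Bₙ₊₁ * conj Bₙ) / (κ₁ ⋯ κₙ)` increase with `n`, and by the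
arithmetic-geometric mean inequality they tend to infinity as soon as `∑ 1 / √κₙ` diverges. Their
reciprocals bound the oscillation of the convergents, so `V x` exists; it differs from `x / 2` by at
most `κ₁ / Re x`.

The three-term recurrences for the parameters `x` and `x + 2` are contiguous: the operator
`Y ↦ βₙ Yₙ + 4 n κₙ (x + 1) Yₙ₋₁`, with `βₙ` a cubic polynomial in `x + 1`, maps solutions of the
first to solutions of the second. Comparing initial values, it sends the numerators and denominators
at `x` to `(x + 2 / 3) ^ 3` and `(x + 4 / 3) ^ 3` times those at `x + 2`. So, up to these factors,
the convergents at `x + 2` are weighted means of two consecutive convergents at `x`, with relative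
weights that stay bounded because `0 ≤ Re (Bₙ₊₁ * conj Bₙ)`. In the limit,
`(x + 2 / 3) ^ 3 * V (x + 2) = (x + 4 / 3) ^ 3 * V x`. Iterating this equation and using
`V x = x / 2 + O(1)`, Gauss's product for `Γ` evaluates `V x`.
-/

open scoped ComplexConjugate Topology

section ContinuedFraction

/-- The three-term recurrence shared by the canonical numerators and denominators of the
continued fraction `b 0 + K (a n / b n)`, with the index shift of `cfA` and `cfB`. -/
def IsCFSolution (a b Y : ℕ → ℂ) : Prop :=
  ∀ n, Y (n + 2) = b (n + 1) * Y (n + 1) + a (n + 1) * Y n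

variable {a b : ℕ → ℂ}

lemma isCFSolution_cfA : IsCFSolution a b (cfA a b) := fun _ ↦ rfl

lemma isCFSolution_cfB : IsCFSolution a b (cfB a b) := fun _ ↦ rfl

lemma IsCFSolution.const_mul {Y : ℕ → ℂ} (hY : IsCFSolution a b Y) (c : ℂ) :
    IsCFSolution a b (fun n ↦ c * Y n) := fun n ↦ by
  simp only [hY n]
  ring

lemma IsCFSolution.ext {Y Z : ℕ → ℂ} (hY : IsCFSolution a b Y) (hZ : IsCFSolution a b Z)
    (h₀ : Y 0 = Z 0) (h₁ : Y 1 = Z 1) (n : ℕ) : Y n = Z n := by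
  induction n using Nat.twoStepInduction with
  | zero => exact h₀
  | one => exact h₁
  | more n ih₀ ih₁ => rw [hY, hZ, ih₀, ih₁]

lemma cfA_mul_cfB_succ_sub (n : ℕ) :
    cfA a b n * cfB a b (n + 1) - cfA a b (n + 1) * cfB a b n =
      ∏ i ∈ Finset.range n, -a (i + 1) := by
  induction n with
  | zero => simp [cfA, cfB]
  | succ n ih =>
    rw [Finset.prod_range_succ, ← ih, isCFSolution_cfA n, isCFSolution_cfB n]
    ring

/-- The finite continued fraction
`b n + a (n + 1) / (b (n + 1) + ⋯ + a (n + j) / b (n + j))`. -/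
noncomputable def cfTail (a b : ℕ → ℂ) : ℕ → ℕ → ℂ
  | 0, n => b n
  | j + 1, n => b n + a (n + 1) / cfTail a b j (n + 1)

lemma exists_eq_mul_cfTail (hT : ∀ j n, cfTail a b j (n + 1) ≠ 0) (j n : ℕ) :
    ∃ c ≠ 0, ∀ Y, IsCFSolution a b Y →
      Y (n + j + 2) = c * (cfTail a b j (n + 1) * Y (n + 1) + a (n + 1) * Y n) := by
  induction j generalizing n with
  | zero => exact ⟨1, one_ne_zero, fun Y hY ↦ by simp [hY n, cfTail]⟩
  | succ j ih =>
    obtain ⟨c, hc, h⟩ := ih (n + 1)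
    have hT' := hT j (n + 1)
    refine ⟨c * cfTail a b j (n + 2), mul_ne_zero hc hT', fun Y hY ↦ ?_⟩
    rw [show n + (j + 1) + 2 = n + 1 + j + 2 by ring, h Y hY, hY n, cfTail]
    field_simp
    ring

end ContinuedFraction

section PositiveNumerators

variable {k : ℕ → ℝ} {b : ℕ → ℂ} {δ : ℝ}

lemma re_le_re_cfTail (hk : ∀ n, 0 < k (n + 1)) (hb : ∀ n, 0 < (b (n + 1)).re) (j n : ℕ) :
    (b n).re ≤ (cfTail (k ·) b j n).re := by
  induction j generalizing n with
  | zero => exact le_rfl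
  | succ j ih =>
    have hre := (hb n).trans_le (ih (n + 1))
    have hk' := hk n
    rw [cfTail, Complex.add_re, div_eq_mul_inv, Complex.re_ofReal_mul, Complex.inv_re,
      le_add_iff_nonneg_right]
    exact mul_nonneg hk'.le (div_nonneg hre.le (Complex.normSq_nonneg _))

lemma cfTail_ne_zero (hk : ∀ n, 0 < k (n + 1)) (hb : ∀ n, 0 < (b (n + 1)).re) (j n : ℕ) :
    cfTail (k ·) b j (n + 1) ≠ 0 :=
  Complex.ne_zero_of_re_pos <| (hb n).trans_le (re_le_re_cfTail hk hb j (n + 1))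

lemma re_mul_add_ofReal_mul_mul_conj (w z y : ℂ) (r : ℝ) :
    ((w * z + r * y) * conj z).re = w.re * ‖z‖ ^ 2 + r * (z * conj y).re := by
  rw [Complex.sq_norm, Complex.normSq_apply]
  simp only [Complex.mul_re, Complex.add_re, Complex.add_im, Complex.mul_im, Complex.conj_re,
    Complex.conj_im, Complex.ofReal_re, Complex.ofReal_im]
  ring

/-- The quantity `Re (Bₙ₊₁ * conj Bₙ) / (k₁ ⋯ kₙ)`, where `Bₙ` are the denominators of the continued
fraction `b 0 + K (k n / b n)`. It is nondecreasing, and its reciprocal bounds the distance of the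
`n`-th convergent to the later ones. -/
noncomputable def cfEnergy (k : ℕ → ℝ) (b : ℕ → ℂ) (n : ℕ) : ℝ :=
  (cfB (k ·) b (n + 1) * conj (cfB (k ·) b n)).re /
    ∏ i ∈ Finset.range n, k (i + 1)

lemma cfEnergy_zero : cfEnergy k b 0 = 0 := by
  simp [cfEnergy, cfB]

lemma cfEnergy_succ (hk : ∀ n, 0 < k (n + 1)) (n : ℕ) :
    cfEnergy k b (n + 1) = cfEnergy k b n +
      (b (n + 1)).re * ‖cfB (k ·) b (n + 1)‖ ^ 2 / ∏ i ∈ Finset.range (n + 1), k (i + 1) := by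
  have hP : ∏ i ∈ Finset.range n, k (i + 1) ≠ 0 := Finset.prod_ne_zero_iff.2 fun i _ ↦ (hk i).ne'
  have hkn := (hk n).ne'
  rw [cfEnergy, cfEnergy, isCFSolution_cfB n, re_mul_add_ofReal_mul_mul_conj,
    Finset.prod_range_succ]
  field_simp
  ring

lemma monotone_cfEnergy (hk : ∀ n, 0 < k (n + 1)) (hb : ∀ n, 0 < (b (n + 1)).re) :
    Monotone (cfEnergy k b) := by
  refine monotone_nat_of_le_succ fun n ↦ ?_
  have hP : 0 < ∏ i ∈ Finset.range (n + 1), k (i + 1) := Finset.prod_pos fun i _ ↦ hk i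
  have hbn := hb n
  rw [cfEnergy_succ hk, le_add_iff_nonneg_right]
  positivity

lemma cfEnergy_succ_pos (hk : ∀ n, 0 < k (n + 1)) (hb : ∀ n, 0 < (b (n + 1)).re) (n : ℕ) :
    0 < cfEnergy k b (n + 1) := by
  have h₁ : cfEnergy k b 1 = (b 1).re / k 1 := by
    simp [cfEnergy_succ hk 0, cfEnergy_zero, cfB]
  calc 0 < (b 1).re / k 1 := div_pos (hb 0) (hk 0)
    _ = cfEnergy k b 1 := h₁.symm
    _ ≤ cfEnergy k b (n + 1) := monotone_cfEnergy hk hb (by lia)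

lemma re_cfB_succ_mul_conj_nonneg (hk : ∀ n, 0 < k (n + 1)) (hb : ∀ n, 0 < (b (n + 1)).re)
    (n : ℕ) : 0 ≤ (cfB (k ·) b (n + 1) * conj (cfB (k ·) b n)).re := by
  have hP : 0 < ∏ i ∈ Finset.range n, k (i + 1) := Finset.prod_pos fun i _ ↦ hk i
  have hE : 0 ≤ cfEnergy k b n := cfEnergy_zero.symm.trans_le (monotone_cfEnergy hk hb n.zero_le)
  rwa [cfEnergy, le_div_iff₀ hP, zero_mul] at hE

lemma cfB_succ_ne_zero (hk : ∀ n, 0 < k (n + 1)) (hb : ∀ n, 0 < (b (n + 1)).re) (n : ℕ) :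
    cfB (k ·) b (n + 1) ≠ 0 := fun h ↦ by
  simpa [cfEnergy, h] using cfEnergy_succ_pos hk hb n

-- The arithmetic-geometric mean inequality, applied to the two increments of `cfEnergy`.
lemma two_mul_cfEnergy_succ_div_sqrt_le (hδ : 0 ≤ δ) (hb : ∀ n, δ ≤ (b (n + 1)).re)
    (hk : ∀ n, 0 < k (n + 1)) (n : ℕ) :
    2 * δ * cfEnergy k b (n + 1) * (√(k (n + 2)))⁻¹ ≤ cfEnergy k b (n + 2) - cfEnergy k b n := by
  set B := cfB (k ·) b with hB
  set P := ∏ i ∈ Finset.range (n + 1), k (i + 1) with hP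
  set s := √(k (n + 2))
  have hP₀ : 0 < P := Finset.prod_pos fun i _ ↦ hk i
  have hs₀ : 0 < s := Real.sqrt_pos.2 (hk (n + 1))
  have hs_sq : k (n + 2) = s ^ 2 := (Real.sq_sqrt (hk (n + 1)).le).symm
  have hE : cfEnergy k b (n + 1) ≤ ‖B (n + 2)‖ * ‖B (n + 1)‖ / P := by
    rw [cfEnergy, ← hP, ← hB]
    gcongr
    exact (Complex.re_le_norm _).trans_eq (by rw [norm_mul, Complex.norm_conj])
  have hdiff : cfEnergy k b (n + 2) - cfEnergy k b n =
      ((b (n + 1)).re * ‖B (n + 1)‖ ^ 2 + (b (n + 2)).re * (‖B (n + 2)‖ / s) ^ 2) / P := by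
    rw [cfEnergy_succ hk (n + 1), cfEnergy_succ hk n, Finset.prod_range_succ _ (n + 1), ← hP, ← hB,
      hs_sq]
    field_simp
    ring
  calc 2 * δ * cfEnergy k b (n + 1) * s⁻¹
      ≤ 2 * δ * (‖B (n + 2)‖ * ‖B (n + 1)‖ / P) * s⁻¹ := by gcongr
    _ = δ * (2 * ‖B (n + 1)‖ * (‖B (n + 2)‖ / s)) / P := by ring
    _ ≤ δ * (‖B (n + 1)‖ ^ 2 + (‖B (n + 2)‖ / s) ^ 2) / P := by
      gcongr
      exact two_mul_le_add_sq _ _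
    _ ≤ cfEnergy k b (n + 2) - cfEnergy k b n := by
      rw [hdiff, mul_add]
      gcongr
      exacts [hb n, hb (n + 1)]

lemma tendsto_cfEnergy_atTop (hδ : 0 < δ) (hb : ∀ n, δ ≤ (b (n + 1)).re)
    (hk : ∀ n, 0 < k (n + 1)) (hdiv : ¬Summable fun n ↦ (√(k n))⁻¹) :
    Tendsto (cfEnergy k b) atTop atTop := by
  have hb₀ : ∀ n, 0 < (b (n + 1)).re := fun n ↦ hδ.trans_le (hb n)
  have hmono := monotone_cfEnergy hk hb₀
  have hE₁ := cfEnergy_succ_pos hk hb₀ 0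
  have hsum (N : ℕ) : δ * cfEnergy k b 1 * ∑ n ∈ Finset.range N, (√(k (n + 2)))⁻¹ ≤
      cfEnergy k b (N + 1) := by
    have htel : 2 * δ * cfEnergy k b 1 * ∑ n ∈ Finset.range N, (√(k (n + 2)))⁻¹ ≤
        cfEnergy k b (N + 1) + cfEnergy k b N := by
      induction N with
      | zero => simpa [cfEnergy_zero] using hE₁.le
      | succ N ih =>
        have hstep := two_mul_cfEnergy_succ_div_sqrt_le hδ.le hb hk N
        have hle : 2 * δ * cfEnergy k b 1 * (√(k (N + 2)))⁻¹ ≤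
            2 * δ * cfEnergy k b (N + 1) * (√(k (N + 2)))⁻¹ := by
          gcongr
          exact hmono (by lia)
        rw [Finset.sum_range_succ, mul_add]
        linarith
    linarith [hmono N.le_succ]
  have hdiv' : Tendsto (fun N ↦ ∑ n ∈ Finset.range N, (√(k (n + 2)))⁻¹) atTop atTop := by
    rwa [← not_summable_iff_tendsto_nat_atTop_of_nonneg fun n ↦ by positivity,
      summable_nat_add_iff (f := fun n ↦ (√(k n))⁻¹) 2]
  refine (tendsto_add_atTop_iff_nat 1).1 (tendsto_atTop_mono hsum ?_)
  exact hdiv'.const_mul_atTop (mul_pos hδ hE₁)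

lemma prod_mul_cfEnergy_succ_le_norm (hk : ∀ n, 0 < k (n + 1)) (n : ℕ) {w : ℂ}
    (hw : (b (n + 1)).re ≤ w.re) :
    (∏ i ∈ Finset.range (n + 1), k (i + 1)) * cfEnergy k b (n + 1) ≤
      ‖(w * cfB (k ·) b (n + 1) + k (n + 1) * cfB (k ·) b n) * cfB (k ·) b (n + 1)‖ := by
  set B := cfB (k ·) b with hB
  have hP : ∏ i ∈ Finset.range (n + 1), k (i + 1) ≠ 0 :=
    Finset.prod_ne_zero_iff.2 fun i _ ↦ (hk i).ne'
  calc (∏ i ∈ Finset.range (n + 1), k (i + 1)) * cfEnergy k b (n + 1)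
      = ((b (n + 1) * B (n + 1) + k (n + 1) * B n) * conj (B (n + 1))).re := by
        rw [cfEnergy, mul_div_cancel₀ _ hP, isCFSolution_cfB n, ← hB]
    _ ≤ ((w * B (n + 1) + k (n + 1) * B n) * conj (B (n + 1))).re := by
        rw [re_mul_add_ofReal_mul_mul_conj, re_mul_add_ofReal_mul_mul_conj]
        gcongr
    _ ≤ ‖(w * B (n + 1) + k (n + 1) * B n) * B (n + 1)‖ := by
        refine (Complex.re_le_norm _).trans_eq ?_
        rw [norm_mul, norm_mul, Complex.norm_conj]

lemma norm_convergent_sub_convergent_le (hk : ∀ n, 0 < k (n + 1))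
    (hb : ∀ n, 0 < (b (n + 1)).re) (n j : ℕ) :
    ‖cfA (k ·) b (n + j + 2) / cfB (k ·) b (n + j + 2) -
      cfA (k ·) b (n + 1) / cfB (k ·) b (n + 1)‖ ≤ (cfEnergy k b (n + 1))⁻¹ := by
  obtain ⟨c, hc, hY⟩ := exists_eq_mul_cfTail (cfTail_ne_zero hk hb) j n
  set T := cfTail (k ·) b j (n + 1)
  set A := cfA (k ·) b
  set B := cfB (k ·) b
  set P := ∏ i ∈ Finset.range (n + 1), k (i + 1) with hP
  have hP₀ : 0 < P := Finset.prod_pos fun i _ ↦ hk i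
  have hB₁ : B (n + 1) ≠ 0 := cfB_succ_ne_zero hk hb n
  have hB₂ : T * B (n + 1) + k (n + 1) * B n ≠ 0 := by
    have h := cfB_succ_ne_zero hk hb (n + j + 1)
    rw [hY _ isCFSolution_cfB] at h
    exact right_ne_zero_of_mul h
  have hE : 0 < P * cfEnergy k b (n + 1) := mul_pos hP₀ (cfEnergy_succ_pos hk hb n)
  have hdet : ‖(A n * B (n + 1) - A (n + 1) * B n) * k (n + 1)‖ = P := by
    have h := cfA_mul_cfB_succ_sub (a := fun i ↦ (k i : ℂ)) (b := b) n
    rw [h, norm_mul, norm_prod, hP, Finset.prod_range_succ]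
    simp only [norm_neg, Complex.norm_of_nonneg (hk _).le]
  have hden : P * cfEnergy k b (n + 1) ≤ ‖(T * B (n + 1) + k (n + 1) * B n) * B (n + 1)‖ :=
    prod_mul_cfEnergy_succ_le_norm hk n (re_le_re_cfTail hk hb j (n + 1))
  calc ‖A (n + j + 2) / B (n + j + 2) - A (n + 1) / B (n + 1)‖
      = ‖(A n * B (n + 1) - A (n + 1) * B n) * k (n + 1) /
          ((T * B (n + 1) + k (n + 1) * B n) * B (n + 1))‖ := by
        rw [hY A isCFSolution_cfA, hY B isCFSolution_cfB, mul_div_mul_left _ _ hc,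
          div_sub_div _ _ hB₂ hB₁]
        ring_nf
    _ = P / ‖(T * B (n + 1) + k (n + 1) * B n) * B (n + 1)‖ := by rw [norm_div, hdet]
    _ ≤ P / (P * cfEnergy k b (n + 1)) := by gcongr
    _ = (cfEnergy k b (n + 1))⁻¹ := by field_simp

theorem exists_cfConvergesTo (hδ : 0 < δ) (hb : ∀ n, δ ≤ (b (n + 1)).re)
    (hk : ∀ n, 0 < k (n + 1)) (hdiv : ¬Summable fun n ↦ (√(k n))⁻¹) :
    ∃ v, CFConvergesTo (k ·) b v := by
  have hb₀ : ∀ n, 0 < (b (n + 1)).re := fun n ↦ hδ.trans_le (hb n)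
  have hcauchy : CauchySeq fun n ↦
      cfA (k ·) b (n + 1) / cfB (k ·) b (n + 1) := by
    refine cauchySeq_of_le_tendsto_0' (fun n ↦ (cfEnergy k b (n + 1))⁻¹) (fun n m hnm ↦ ?_) ?_
    · obtain rfl | hlt := hnm.eq_or_lt
      · rw [dist_self]
        exact inv_nonneg.2 (cfEnergy_succ_pos hk hb₀ n).le
      · obtain ⟨j, rfl⟩ := Nat.exists_eq_add_of_lt hlt
        rw [dist_comm, dist_eq_norm]
        exact norm_convergent_sub_convergent_le hk hb₀ n j
    · exact (tendsto_cfEnergy_atTop hδ hb hk hdiv).inv_tendsto_atTop.comp (tendsto_add_atTop_nat 1)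
  obtain ⟨v, hv⟩ := cauchySeq_tendsto_of_complete hcauchy
  refine ⟨v, ?_, (tendsto_add_atTop_iff_nat 1).1 hv⟩
  filter_upwards [eventually_ge_atTop 1] with n hn
  obtain ⟨m, rfl⟩ := Nat.exists_eq_add_of_le' hn
  exact cfB_succ_ne_zero hk hb₀ m

lemma norm_sub_le_of_cfConvergesTo (hδ : 0 < δ) (hb : ∀ n, δ ≤ (b (n + 1)).re)
    (hk : ∀ n, 0 < k (n + 1)) {v : ℂ} (hv : CFConvergesTo (k ·) b v) :
    ‖v - b 0‖ ≤ k 1 / δ := by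
  have hb₀ : ∀ n, 0 < (b (n + 1)).re := fun n ↦ hδ.trans_le (hb n)
  have hlim := (((tendsto_add_atTop_iff_nat 2).2 hv.2).sub_const (b 0)).norm
  refine le_of_tendsto' hlim fun j ↦ ?_
  obtain ⟨c, hc, hY⟩ := exists_eq_mul_cfTail (cfTail_ne_zero hk hb₀) j 0
  set T := cfTail (k ·) b j (0 + 1)
  have hT : T ≠ 0 := cfTail_ne_zero hk hb₀ j 0
  have hδT : δ ≤ ‖T‖ :=
    (hb 0).trans ((re_le_re_cfTail hk hb₀ j 1).trans (Complex.re_le_norm T))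
  have hk₁ := hk 0
  rw [zero_add] at hY
  have hconv : cfA (k ·) b (j + 2) / cfB (k ·) b (j + 2) - b 0 = k 1 / T := by
    rw [hY _ isCFSolution_cfA, hY _ isCFSolution_cfB]
    simp only [cfA, cfB, mul_one, mul_zero, add_zero, zero_add]
    field_simp
    ring
  rw [hconv, norm_div, Complex.norm_of_nonneg hk₁.le]
  gcongr

end PositiveNumerators

section WeightedConvergents

lemma tendsto_weighted_mean {ι 𝕜 : Type*} [NormedField 𝕜] {l : Filter ι} {u u' α β : ι → 𝕜} {v : 𝕜}
    {C : ℝ} (hu : Tendsto u l (𝓝 v)) (hu' : Tendsto u' l (𝓝 v)) (hα : ∀ᶠ n in l, α n ≠ 0)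
    (hβ : ∀ᶠ n in l, ‖β n‖ ≤ C * ‖α n + β n‖) :
    Tendsto (fun n ↦ (α n * u n + β n * u' n) / (α n + β n)) l (𝓝 v) := by
  have hdiff : Tendsto (fun n ↦ C * ‖u' n - u n‖) l (𝓝 0) := by
    simpa using ((hu'.sub hu).norm.const_mul C)
  have hsum : ∀ᶠ n in l, α n + β n ≠ 0 := by
    filter_upwards [hα, hβ] with n hαn hβn h
    have hβ₀ : β n = 0 := by simpa [h] using hβn
    exact hαn (by simpa [hβ₀] using h)
  have hcorr : Tendsto (fun n ↦ β n / (α n + β n) * (u' n - u n)) l (𝓝 0) := by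
    refine squeeze_zero_norm' ?_ hdiff
    filter_upwards [hsum, hβ] with n hn hβn
    rw [norm_mul, norm_div]
    gcongr
    exact (div_le_iff₀ (norm_pos_iff.2 hn)).2 hβn
  have hlim := hu.add hcorr
  rw [add_zero] at hlim
  refine hlim.congr' ?_
  filter_upwards [hsum] with n hn
  field_simp
  ring

lemma mul_re_mul_norm_le_norm_mul_norm_add {z w : ℂ} (hzw : 0 ≤ (z * conj w).re) (σ : ℂ) (τ : ℝ) :
    τ * σ.re * ‖w‖ ≤ ‖σ‖ * ‖σ * z + τ * w‖ := by
  obtain rfl | hw := eq_or_ne w 0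
  · simpa using by positivity
  refine le_of_mul_le_mul_right ?_ (norm_pos_iff.2 hw)
  calc τ * σ.re * ‖w‖ * ‖w‖
      ≤ ‖σ‖ ^ 2 * (z * conj w).re + τ * σ.re * ‖w‖ ^ 2 := by
        rw [mul_assoc _ ‖w‖, ← sq]
        exact le_add_of_nonneg_left (by positivity)
    _ = ((σ * z + τ * w) * conj (σ * w)).re := by
        rw [Complex.sq_norm, Complex.sq_norm, Complex.normSq_apply, Complex.normSq_apply]
        simp only [Complex.mul_re, Complex.add_re, Complex.add_im, Complex.mul_im,
          Complex.conj_re, Complex.conj_im, Complex.ofReal_re, Complex.ofReal_im]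
        ring
    _ ≤ ‖σ‖ * ‖σ * z + τ * w‖ * ‖w‖ := by
        refine (Complex.re_le_norm _).trans_eq ?_
        rw [norm_mul, Complex.norm_conj, norm_mul σ w]
        ring

variable {k : ℕ → ℝ} {b : ℕ → ℂ}

lemma CFConvergesTo.tendsto_weighted_convergents (hk : ∀ n, 0 < k (n + 1))
    (hb : ∀ n, 0 < (b (n + 1)).re) {v s : ℂ} (hv : CFConvergesTo (k ·) b v) (hs : 0 < s.re)
    {σ : ℕ → ℂ} (hσ : Tendsto σ atTop (𝓝 s)) {τ : ℕ → ℝ} (hτ : ∀ n, 0 ≤ τ n) :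
    Tendsto (fun n ↦ (σ n * cfA (k ·) b (n + 1) + τ n * cfA (k ·) b n) /
      (σ n * cfB (k ·) b (n + 1) + τ n * cfB (k ·) b n)) atTop (𝓝 v) := by
  set A := cfA (k ·) b
  set B := cfB (k ·) b
  have hσ_re : Tendsto (fun n ↦ (σ n).re) atTop (𝓝 s.re) :=
    (Complex.continuous_re.tendsto s).comp hσ
  have hpos : ∀ᶠ n in atTop, 0 < (σ n).re := hσ_re.eventually_const_lt hs
  set C := ‖s‖ / s.re + 1 with hC
  have hsector : ∀ᶠ n in atTop, ‖σ n‖ < C * (σ n).re := by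
    refine hσ.norm.eventually_lt (hσ_re.const_mul C) ?_
    rw [hC, add_one_mul, div_mul_cancel₀ _ hs.ne']
    exact lt_add_of_pos_right _ hs
  have hbound : ∀ᶠ n in atTop, ‖τ n * B n‖ ≤ C * ‖σ n * B (n + 1) + τ n * B n‖ := by
    filter_upwards [hpos, hsector] with n hn hsec
    refine le_of_mul_le_mul_right ?_ hn
    calc ‖τ n * B n‖ * (σ n).re = τ n * (σ n).re * ‖B n‖ := by
          rw [norm_mul, Complex.norm_of_nonneg (hτ n)]
          ring
      _ ≤ ‖σ n‖ * ‖σ n * B (n + 1) + τ n * B n‖ :=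
          mul_re_mul_norm_le_norm_mul_norm_add (re_cfB_succ_mul_conj_nonneg hk hb n) _ _
      _ ≤ C * (σ n).re * ‖σ n * B (n + 1) + τ n * B n‖ := by gcongr
      _ = C * ‖σ n * B (n + 1) + τ n * B n‖ * (σ n).re := by ring
  have hne : ∀ᶠ n in atTop, σ n * B (n + 1) ≠ 0 := by
    filter_upwards [hpos] with n hn
    exact mul_ne_zero (Complex.ne_zero_of_re_pos hn) (cfB_succ_ne_zero hk hb n)
  refine (tendsto_weighted_mean ((tendsto_add_atTop_iff_nat 1).2 hv.2) hv.2 hne hbound).congr' ?_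
  filter_upwards [(tendsto_add_atTop_nat 1).eventually hv.1, hv.1] with n hB₁ hB₀
  rw [mul_assoc, mul_assoc, mul_div_cancel₀ _ hB₁, mul_div_cancel₀ _ hB₀]

end WeightedConvergents

section Kappa

/-- The partial numerators `aSeq` as real numbers, with the parameter `m` of the two cases
eliminated in favour of the index `n`. -/
noncomputable def kappa (n : ℕ) : ℝ :=
  if Even n then (3 * n - 2) ^ 3 / (108 * (n - 1)) else (3 * n - 1) ^ 3 / (108 * n)

lemma kappa_of_even {n : ℕ} (hn : Even n) : kappa n = (3 * n - 2) ^ 3 / (108 * (n - 1)) :=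
  if_pos hn

lemma kappa_of_odd {n : ℕ} (hn : Odd n) : kappa n = (3 * n - 1) ^ 3 / (108 * n) :=
  if_neg (Nat.not_even_iff_odd.2 hn)

lemma aSeq_eq_ofReal_kappa : aSeq = fun n ↦ (kappa n : ℂ) := by
  funext n
  obtain ⟨m, rfl | rfl⟩ := n.even_or_odd'
  · rw [kappa_of_even (even_two_mul m), aSeq, if_pos (by lia), show 2 * m / 2 = m by lia]
    push_cast
    rw [← mul_div_mul_left _ _ (show (4 : ℂ) ≠ 0 by norm_num)]
    ring_nf
  · rw [kappa_of_odd (odd_two_mul_add_one m), aSeq, if_neg (by lia),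
      show (2 * m + 1 + 1) / 2 = m + 1 by lia]
    push_cast
    rw [← mul_div_mul_left _ _ (show (4 : ℂ) ≠ 0 by norm_num)]
    ring_nf

lemma kappa_succ_pos (n : ℕ) : 0 < kappa (n + 1) := by
  obtain hn | hn := n.even_or_odd
  · rw [kappa_of_odd hn.add_one]
    push_cast
    ring_nf
    positivity
  · have hn₀ : (0 : ℝ) < n := mod_cast hn.pos
    rw [kappa_of_even hn.add_one]
    push_cast
    ring_nf
    positivity

lemma kappa_succ_le_sq (n : ℕ) : kappa (n + 1) ≤ ((n : ℝ) + 1) ^ 2 := by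
  obtain hn | hn := n.even_or_odd
  · rw [kappa_of_odd hn.add_one, div_le_iff₀ (by positivity)]
    push_cast
    rw [← sub_nonneg]
    ring_nf
    positivity
  · have hn₁ : (1 : ℝ) ≤ n := mod_cast hn.pos
    rw [kappa_of_even hn.add_one]
    push_cast
    rw [div_le_iff₀ (by linarith)]
    nlinarith [mul_nonneg (sub_nonneg.2 hn₁) (sq_nonneg (n : ℝ))]

lemma not_summable_inv_sqrt_kappa : ¬Summable fun n ↦ (√(kappa n))⁻¹ := by
  refine fun h ↦ Real.not_summable_natCast_inv
    (h.of_nonneg_of_le (fun n ↦ by positivity) fun n ↦ ?_)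
  obtain _ | n := n
  · simp
  · have hpos := Real.sqrt_pos.2 (kappa_succ_pos n)
    gcongr
    exact (Real.sqrt_le_left (by positivity)).2 (mod_cast kappa_succ_le_sq n)

lemma bSeq_succ (x : ℂ) (n : ℕ) : bSeq x (n + 1) = x := if_neg n.succ_ne_zero

theorem exists_cfConvergesTo_aSeq {x : ℂ} (hx : 0 < x.re) :
    ∃ v, CFConvergesTo aSeq (bSeq x) v := by
  rw [aSeq_eq_ofReal_kappa]
  exact exists_cfConvergesTo hx (fun n ↦ (congrArg Complex.re (bSeq_succ x n)).ge) kappa_succ_pos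
    not_summable_inv_sqrt_kappa

/-- The value of the continued fraction `x / 2 + K (aSeq n / x)`, with a junk value where it
diverges. -/
noncomputable def kappaCF (x : ℂ) : ℂ :=
  limUnder atTop fun n ↦ cfA aSeq (bSeq x) n / cfB aSeq (bSeq x) n

lemma cfConvergesTo_kappaCF {x : ℂ} (hx : 0 < x.re) :
    CFConvergesTo aSeq (bSeq x) (kappaCF x) := by
  obtain ⟨v, hB, hv⟩ := exists_cfConvergesTo_aSeq hx
  exact ⟨hB, tendsto_nhds_limUnder ⟨v, hv⟩⟩

lemma norm_kappaCF_sub_half_le {x : ℂ} {δ : ℝ} (hδ : 0 < δ) (hx : δ ≤ x.re) :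
    ‖kappaCF x - x / 2‖ ≤ kappa 1 / δ := by
  have hv := cfConvergesTo_kappaCF (hδ.trans_le hx)
  rw [aSeq_eq_ofReal_kappa] at hv
  exact norm_sub_le_of_cfConvergesTo hδ (fun n ↦ by rwa [bSeq_succ]) kappa_succ_pos hv

end Kappa

section Contiguous

/-- The coefficient of `Y n` in the contiguous solution `contiguous x Y n`. -/
noncomputable def contiguousCoeff (x : ℂ) (n : ℕ) : ℂ :=
  (x + 1) ^ 3 + (2 * n - 1) * (x + 1) ^ 2 + (2 * n ^ 2 - 2 * n + 1 / 3) * (x + 1) - (-1) ^ n / 27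

/-- The operator that turns solutions of the recurrence with parameter `x` into solutions of the
recurrence with parameter `x + 2`. At `n = 0` the truncated index `n - 1` is harmless, since its
coefficient vanishes. -/
noncomputable def contiguous (x : ℂ) (Y : ℕ → ℂ) (n : ℕ) : ℂ :=
  contiguousCoeff x n * Y n + 4 * n * kappa n * (x + 1) * Y (n - 1)

lemma contiguousCoeff_add_two (x : ℂ) (n : ℕ) :
    contiguousCoeff x (n + 2) = contiguousCoeff x n + 4 * (x + 1) * (x + 2 * n + 2) := by
  simp only [contiguousCoeff, pow_add, Nat.cast_add, Nat.cast_ofNat]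
  ring

lemma mul_contiguousCoeff_add_two (x : ℂ) (n : ℕ) :
    x * contiguousCoeff x (n + 2) + 4 * (n + 2) * kappa (n + 2) * (x + 1) =
      (x + 2) * contiguousCoeff x (n + 1) + 4 * n * kappa (n + 1) * (x + 1) := by
  have h₁ : (n : ℂ) + 1 ≠ 0 := n.cast_add_one_ne_zero
  have h₂ : (n : ℂ) + 2 ≠ 0 := mod_cast (n + 1).cast_add_one_ne_zero (R := ℂ)
  obtain hn | hn := n.even_or_odd
  · rw [kappa_of_even (hn.add even_two), kappa_of_odd hn.add_one, contiguousCoeff, contiguousCoeff,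
      (hn.add even_two).neg_one_pow, hn.add_one.neg_one_pow]
    push_cast
    rw [show (n : ℂ) + 2 - 1 = n + 1 by ring]
    field_simp
    ring
  · have h₀ : (n : ℂ) ≠ 0 := mod_cast hn.pos.ne'
    rw [kappa_of_odd (hn.add_even even_two), kappa_of_even hn.add_one, contiguousCoeff,
      contiguousCoeff, (hn.add_even even_two).neg_one_pow, hn.add_one.neg_one_pow]
    push_cast
    rw [show (n : ℂ) + 1 - 1 = n by ring]
    field_simp
    ring

lemma isCFSolution_contiguous {x : ℂ} {Y : ℕ → ℂ} (hY : IsCFSolution aSeq (bSeq x) Y) :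
    IsCFSolution aSeq (bSeq (x + 2)) (contiguous x Y) := by
  intro n
  have hrec (m : ℕ) : Y (m + 2) = x * Y (m + 1) + kappa (m + 1) * Y m := by
    simpa only [bSeq_succ, aSeq_eq_ofReal_kappa] using hY m
  have hprev : n * (kappa n * Y (n - 1)) = n * (Y (n + 1) - x * Y n) := by
    obtain _ | m := n
    · simp
    · rw [hrec m]
      simp
  simp only [bSeq_succ, aSeq_eq_ofReal_kappa, contiguous, Nat.add_sub_cancel,
    show n + 2 - 1 = n + 1 by lia, hrec n]
  push_cast
  linear_combination Y (n + 1) * mul_contiguousCoeff_add_two x n +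
    kappa (n + 1) * Y n * contiguousCoeff_add_two x n - 4 * (x + 1) * kappa (n + 1) * hprev

lemma kappa_one : kappa 1 = 2 / 27 := by
  rw [kappa_of_odd odd_one]
  norm_num

lemma contiguous_cfA (x : ℂ) (n : ℕ) :
    contiguous x (cfA aSeq (bSeq x)) n = (x + 2 / 3) ^ 3 * cfA aSeq (bSeq (x + 2)) n := by
  refine (isCFSolution_contiguous isCFSolution_cfA).ext (isCFSolution_cfA.const_mul _) ?_ ?_ n
  · simp only [contiguous, contiguousCoeff, cfA]
    push_cast
    ring
  · rw [contiguous, Nat.sub_self]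
    simp only [contiguousCoeff, cfA, bSeq, kappa_one, ↓reduceIte]
    push_cast
    ring

lemma contiguous_cfB (x : ℂ) (n : ℕ) :
    contiguous x (cfB aSeq (bSeq x)) n = (x + 4 / 3) ^ 3 * cfB aSeq (bSeq (x + 2)) n := by
  refine (isCFSolution_contiguous isCFSolution_cfB).ext (isCFSolution_cfB.const_mul _) ?_ ?_ n
  · simp only [contiguous, contiguousCoeff, cfB]
    push_cast
    ring
  · rw [contiguous, Nat.sub_self]
    simp only [contiguousCoeff, cfB]
    push_cast
    ring

lemma tendsto_contiguousCoeff_div_sq {x : ℂ} (hx : x + 1 ≠ 0) :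
    Tendsto (fun n : ℕ ↦ contiguousCoeff x n / ((x + 1) * n ^ 2)) atTop (𝓝 2) := by
  have hinv : Tendsto (fun n : ℕ ↦ (n : ℂ)⁻¹) atTop (𝓝 0) := tendsto_inv_atTop_nhds_zero_nat
  have hsign : Tendsto (fun n : ℕ ↦ (-1 : ℂ) ^ n * (n : ℂ)⁻¹) atTop (𝓝 0) := by
    refine squeeze_zero_norm (fun n ↦ ?_) (tendsto_inv_atTop_nhds_zero_nat (𝕜 := ℝ))
    simp
  have hlim : Tendsto (fun n : ℕ ↦ 2 + 2 * x * (n : ℂ)⁻¹ +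
      (x ^ 2 + x + 1 / 3) * ((n : ℂ)⁻¹ * (n : ℂ)⁻¹) -
      1 / (27 * (x + 1)) * ((-1) ^ n * (n : ℂ)⁻¹ * (n : ℂ)⁻¹)) atTop (𝓝 2) := by
    simpa using (((hinv.const_mul (2 * x)).const_add 2).add
      ((hinv.mul hinv).const_mul (x ^ 2 + x + 1 / 3))).sub
      ((hsign.mul hinv).const_mul (1 / (27 * (x + 1))))
  refine hlim.congr' ?_
  filter_upwards [eventually_ne_atTop 0] with n hn
  have hn' : (n : ℂ) ≠ 0 := mod_cast hn
  rw [contiguousCoeff]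
  field_simp
  ring

lemma re_add_pos {z c : ℂ} (hz : 0 < z.re) (hc : 0 ≤ c.re) : 0 < (z + c).re :=
  add_pos_of_pos_of_nonneg hz hc

theorem kappaCF_add_two {x : ℂ} (hx : 0 < x.re) :
    (x + 2 / 3) ^ 3 * kappaCF (x + 2) = (x + 4 / 3) ^ 3 * kappaCF x := by
  have hx₁ : x + 1 ≠ 0 := Complex.ne_zero_of_re_pos (re_add_pos hx (by norm_num))
  have hx₂ : 0 < (x + 2).re := re_add_pos hx (by norm_num)
  have hq : (x + 4 / 3) ^ 3 ≠ 0 :=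
    pow_ne_zero 3 (Complex.ne_zero_of_re_pos (re_add_pos hx (by norm_num)))
  have hv := cfConvergesTo_kappaCF hx
  rw [aSeq_eq_ofReal_kappa] at hv
  have hweighted := hv.tendsto_weighted_convergents kappa_succ_pos (fun n ↦ by rwa [bSeq_succ])
    (by norm_num) ((tendsto_add_atTop_iff_nat 1).2 (tendsto_contiguousCoeff_div_sq hx₁))
    (τ := fun n ↦ 4 * kappa (n + 1) / (n + 1)) fun n ↦ by have := kappa_succ_pos n; positivity
  have hshift := ((tendsto_add_atTop_iff_nat 1).2
    (cfConvergesTo_kappaCF hx₂).2).const_mul ((x + 2 / 3) ^ 3 / (x + 4 / 3) ^ 3)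
  have heq : (x + 2 / 3) ^ 3 / (x + 4 / 3) ^ 3 * kappaCF (x + 2) = kappaCF x := by
    refine tendsto_nhds_unique (hshift.congr fun n ↦ ?_) hweighted
    have hn : (n : ℂ) + 1 ≠ 0 := n.cast_add_one_ne_zero
    have hscale (Y : ℕ → ℂ) : contiguous x Y (n + 1) = (x + 1) * (n + 1) ^ 2 *
        (contiguousCoeff x (n + 1) / ((x + 1) * (n + 1 : ℕ) ^ 2) * Y (n + 1) +
          (4 * kappa (n + 1) / (n + 1) : ℝ) * Y n) := by
      rw [contiguous, Nat.add_sub_cancel]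
      push_cast
      field_simp
    rw [← mul_div_mul_comm, ← contiguous_cfA, ← contiguous_cfB, hscale, hscale,
      mul_div_mul_left _ _ (mul_ne_zero hx₁ (pow_ne_zero 2 hn)), aSeq_eq_ofReal_kappa]
  rw [← heq, ← mul_assoc, mul_div_cancel₀ _ hq]

end Contiguous

section Gamma

lemma tendsto_cpow_mul_prod_div_Gamma (a b : ℂ) (ha : Complex.Gamma a ≠ 0) :
    Tendsto (fun n : ℕ ↦ (n : ℂ) ^ (b - a) * ∏ j ∈ Finset.range (n + 1), (a + j) / (b + j)) atTop
      (𝓝 (Complex.Gamma b / Complex.Gamma a)) := by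
  refine ((Complex.GammaSeq_tendsto_Gamma b).div (Complex.GammaSeq_tendsto_Gamma a) ha).congr' ?_
  filter_upwards [eventually_ne_atTop 0] with n hn
  have hn' : (n : ℂ) ≠ 0 := mod_cast hn
  have hfac : (n.factorial : ℂ) ≠ 0 := mod_cast n.factorial_ne_zero
  have hpow : (n : ℂ) ^ a ≠ 0 := by simp [hn']
  rw [Pi.div_apply, Complex.GammaSeq, Complex.GammaSeq, Complex.cpow_sub _ _ hn',
    Finset.prod_div_distrib, div_div_div_eq]
  field_simp

lemma re_le_re_add_two_mul_natCast (x : ℂ) (n : ℕ) : x.re ≤ (x + 2 * n).re := by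
  simp

lemma re_add_div_two_pos {x c : ℂ} (hx : 0 < x.re) (hc : 0 ≤ c.re) : 0 < ((x + c) / 2).re := by
  rw [Complex.div_ofNat_re]
  exact half_pos (re_add_pos hx hc)

lemma kappaCF_eq_mul_prod {x : ℂ} (hx : 0 < x.re) (n : ℕ) :
    kappaCF x = kappaCF (x + 2 * n) *
      (∏ j ∈ Finset.range n, ((x + 2 / 3) / 2 + j) / ((x + 4 / 3) / 2 + j)) ^ 3 := by
  induction n with
  | zero => simp
  | succ n ih =>
    have hxn : 0 < (x + 2 * n).re := hx.trans_le (re_le_re_add_two_mul_natCast x n)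
    have hq : (x + 4 / 3) / 2 + n ≠ 0 := Complex.ne_zero_of_re_pos <|
      re_add_pos (re_add_div_two_pos hx (by norm_num)) n.cast_nonneg
    have hfun := kappaCF_add_two hxn
    have hstep : kappaCF (x + 2 * n) = kappaCF (x + 2 * (n + 1 : ℕ)) *
        (((x + 2 / 3) / 2 + n) / ((x + 4 / 3) / 2 + n)) ^ 3 := by
      rw [show x + 2 * (n + 1 : ℕ) = x + 2 * n + 2 by push_cast; ring, div_pow, mul_div_assoc',
        eq_div_iff (pow_ne_zero 3 hq)]
      linear_combination -hfun / 8
    rw [ih, hstep, Finset.prod_range_succ, mul_pow]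
    ring

lemma tendsto_kappaCF_add_two_mul_div {x : ℂ} (hx : 0 < x.re) :
    Tendsto (fun n : ℕ ↦ kappaCF (x + 2 * (n + 1 : ℕ)) / n) atTop (𝓝 1) := by
  have herr : Tendsto (fun n : ℕ ↦
      (kappaCF (x + 2 * (n + 1 : ℕ)) - (x + 2 * (n + 1 : ℕ)) / 2) / n) atTop (𝓝 0) := by
    refine squeeze_zero_norm (fun n ↦ ?_) (tendsto_const_div_atTop_nhds_zero_nat (kappa 1 / x.re))
    rw [norm_div, Complex.norm_natCast]
    gcongr
    exact norm_kappaCF_sub_half_le hx (re_le_re_add_two_mul_natCast x (n + 1))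
  have hlim := (herr.add (tendsto_const_div_atTop_nhds_zero_nat (x / 2 + 1))).add_const 1
  rw [zero_add, zero_add] at hlim
  refine hlim.congr' ?_
  filter_upwards [eventually_ne_atTop 0] with n hn
  have hn' : (n : ℂ) ≠ 0 := mod_cast hn
  push_cast
  field_simp
  ring

theorem kappaCF_eq_Gamma {x : ℂ} (hx : 0 < x.re) :
    kappaCF x = (Complex.Gamma ((x + 4 / 3) / 2) / Complex.Gamma ((x + 2 / 3) / 2)) ^ 3 := by
  have hΓ : Complex.Gamma ((x + 2 / 3) / 2) ≠ 0 :=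
    Complex.Gamma_ne_zero_of_re_pos (re_add_div_two_pos hx (by norm_num))
  have hlim := (tendsto_kappaCF_add_two_mul_div hx).mul
    ((tendsto_cpow_mul_prod_div_Gamma _ ((x + 4 / 3) / 2) hΓ).pow 3)
  rw [one_mul] at hlim
  refine tendsto_nhds_unique (tendsto_const_nhds.congr' ?_) hlim
  filter_upwards [eventually_ne_atTop 0] with n hn
  have hn' : (n : ℂ) ≠ 0 := mod_cast hn
  have hcube : ((n : ℂ) ^ ((x + 4 / 3) / 2 - (x + 2 / 3) / 2)) ^ 3 = n := by
    rw [show (x + 4 / 3) / 2 - (x + 2 / 3) / 2 = ((3 : ℕ) : ℂ)⁻¹ by push_cast; ring,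
      Complex.cpow_nat_inv_pow _ three_ne_zero]
  rw [mul_pow, hcube, kappaCF_eq_mul_prod hx (n + 1)]
  field_simp

end Gamma

theorem stmt11 (x : ℂ) (hx : 0 < x.re) :
    ∃ v : ℂ, v ≠ 0 ∧ CFConvergesTo aSeq (bSeq x) v ∧
      Complex.Gamma ((x + 2 / 3) / 2) ^ 3 / Complex.Gamma ((x + 4 / 3) / 2) ^ 3 = 1 / v := by
  have hnum : Complex.Gamma ((x + 2 / 3) / 2) ≠ 0 :=
    Complex.Gamma_ne_zero_of_re_pos (re_add_div_two_pos hx (by norm_num))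
  have hden : Complex.Gamma ((x + 4 / 3) / 2) ≠ 0 :=
    Complex.Gamma_ne_zero_of_re_pos (re_add_div_two_pos hx (by norm_num))
  refine ⟨kappaCF x, ?_, cfConvergesTo_kappaCF hx, ?_⟩
  · rw [kappaCF_eq_Gamma hx]
    exact pow_ne_zero 3 (div_ne_zero hden hnum)
  · rw [kappaCF_eq_Gamma hx, div_pow, one_div_div]
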